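/- Let V be a simple b-module, t ∈ ℤ_+ with the action of L_t on V injective and L_i V = 0 for all i > t, and let ℓ ∈ ℂ. Then for every integer i > t the actions of L_i and G_{i−1/2} on Ind_ℓ(V) are locally nilpotent; consequently Ind_ℓ(V) is a simple restricted N-module of central charge ℓ. -/

import Mathlib

/-- A module over the Neveu–Schwarz algebra. `L m` is the action of `L_m`,
`G j` is the action of `G_{j - 1/2”}`, `C` is the action of the central element `c`. -/
structure NSRep : Type 1 where
  carrier : Type
  [isAddCommGroup : AddCommGroup carrier]
  [isModule : Module ℂ carrier]
  L : ℤ → carrier →ₗ[ℂ] carrier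
  G : ℤ → carrier →ₗ[ℂ] carrier
  C : carrier →ₗ[ℂ] carrier
  commC_L : ∀ (m : ℤ) (v : carrier), C (L m v) = L m (C v)
  commC_G : ∀ (j : ℤ) (v : carrier), C (G j v) = G j (C v)
  rel_LL : ∀ (m n : ℤ) (v : carrier),
    L m (L n v) - L n (L m v)
      = ((m : ℂ) - n) • L (m + n) v
        + (if m + n = 0 then ((m : ℂ) ^ 3 - m) / 12 else 0) • C v
  rel_LG : ∀ (m j : ℤ) (v : carrier),
    L m (G j v) - G j (L m v) = (((m : ℂ) - 2 * j + 1) / 2) • G (m + j) v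
  rel_GG : ∀ (j k : ℤ) (v : carrier),
    G j (G k v) + G k (G j v)
      = (2 : ℂ) • L (j + k - 1) v
        + (if j + k = 1 then ((j : ℂ) ^ 2 - j) / 3 else 0) • C v

attribute [instance] NSRep.isAddCommGroup NSRep.isModule

def NSRep.Invariant (M : NSRep) (p : Submodule ℂ M.carrier) : Prop :=
  (∀ (m : ℤ), ∀ v ∈ p, M.L m v ∈ p) ∧ (∀ (j : ℤ), ∀ v ∈ p, M.G j v ∈ p) ∧
    (∀ v ∈ p, M.C v ∈ p)

def NSRep.IsSimple (M : NSRep) : Prop :=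
  (∃ v : M.carrier, v ≠ 0) ∧
    ∀ p : Submodule ℂ M.carrier, M.Invariant p → p = ⊥ ∨ p = ⊤

def NSRep.IsRestricted (M : NSRep) : Prop :=
  ∀ v : M.carrier, ∃ N : ℤ, ∀ i : ℤ, N ≤ i → M.L i v = 0 ∧ M.G i v = 0

def NSRep.HasCentralCharge (M : NSRep) (ℓ : ℂ) : Prop :=
  ∀ v : M.carrier, M.C v = ℓ • v

/-- A module over the subalgebra `b = ⊕_{i ≥ 0} ℂ L_i ⊕ ⊕_{i ≥ 1} ℂ G_{i-1/2}`.
`L i` is the action of `L_i` and `G j` is the action of `G_{j + 1/2}`. -/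
structure BRep : Type 1 where
  carrier : Type
  [isAddCommGroup : AddCommGroup carrier]
  [isModule : Module ℂ carrier]
  L : ℕ → carrier →ₗ[ℂ] carrier
  G : ℕ → carrier →ₗ[ℂ] carrier
  rel_LL : ∀ (m n : ℕ) (v : carrier),
    L m (L n v) - L n (L m v) = ((m : ℂ) - n) • L (m + n) v
  rel_LG : ∀ (m j : ℕ) (v : carrier),
    L m (G j v) - G j (L m v) = (((m : ℂ) - 2 * j - 1) / 2) • G (m + j) v
  rel_GG : ∀ (j k : ℕ) (v : carrier),
    G j (G k v) + G k (G j v) = (2 : ℂ) • L (j + k + 1) v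

attribute [instance] BRep.isAddCommGroup BRep.isModule

def BRep.Invariant (V : BRep) (p : Submodule ℂ V.carrier) : Prop :=
  (∀ (i : ℕ), ∀ v ∈ p, V.L i v ∈ p) ∧ (∀ (j : ℕ), ∀ v ∈ p, V.G j v ∈ p)

def BRep.IsSimple (V : BRep) : Prop :=
  (∃ v : V.carrier, v ≠ 0) ∧
    ∀ p : Submodule ℂ V.carrier, V.Invariant p → p = ⊥ ∨ p = ⊤

/-- `ι` is a homomorphism of `b`-modules from the `b`-module `V` to the restriction
of the Neveu–Schwarz module `M` to `b` (under which `BRep.G j = G_{j+1/2}`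
corresponds to `NSRep.G (j+1)`). -/
def IsBLinear (V : BRep) (M : NSRep) (ι : V.carrier →ₗ[ℂ] M.carrier) : Prop :=
  (∀ (i : ℕ) (v : V.carrier), ι (V.L i v) = M.L (i : ℤ) (ι v)) ∧
    (∀ (j : ℕ) (v : V.carrier), ι (V.G j v) = M.G ((j : ℤ) + 1) (ι v))

def IsNSHom (M W : NSRep) (F : M.carrier →ₗ[ℂ] W.carrier) : Prop :=
  (∀ (m : ℤ) (v : M.carrier), F (M.L m v) = W.L m (F v)) ∧
    (∀ (j : ℤ) (v : M.carrier), F (M.G j v) = W.G j (F v)) ∧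
    (∀ v : M.carrier, F (M.C v) = W.C (F v))

/-- `M`, together with the `b`-module map `ι : V → M`, is the induced module
`Ind_ℓ(V) = U(N) ⊗_{U(b)} V / (c - ℓ)`, characterized by its universal property. -/
def IsInduced (ℓ : ℂ) (V : BRep) (M : NSRep) (ι : V.carrier →ₗ[ℂ] M.carrier) : Prop :=
  IsBLinear V M ι ∧ M.HasCentralCharge ℓ ∧
    ∀ W : NSRep, W.HasCentralCharge ℓ →
      ∀ f : V.carrier →ₗ[ℂ] W.carrier, IsBLinear V W f →
        ∃! F : M.carrier →ₗ[ℂ] W.carrier, IsNSHom M W F ∧ F.comp ι = f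

/-- The action of an endomorphism `f` on a module is locally nilpotent if for every vector `v`
there is `n ∈ ℤ_+` with `fⁿ v = 0`. -/
def LocallyNilpotentEnd {α : Type} [AddCommGroup α] [Module ℂ α] (f : α →ₗ[ℂ] α) : Prop :=
  ∀ v : α, ∃ n : ℕ, 0 < n ∧ ((f : Module.End ℂ α) ^ n) v = 0

/-!
Write `T = 2t` and `E_k` for `L_{k/2}` or `G_{k/2}` according to the parity of `k`. The induced
module is filtered by `F_d`, the span of the products `E_{-m₁} ⋯ E_{-mᵣ} v` with `v ∈ V`, `mᵢ ≥ 1`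
and `m₁ + ⋯ + mᵣ ≤ d`. Simplicity of `V` forces `G_{t+1/2} V = 0`, so `E_k V = 0` for `k > T`.
Moving `E_k` to the right shows that for `k > T` it lowers the filtration, which gives local
nilpotency, and that it kills `F_d` for `k > T + d`, which gives restrictedness.

On the associated graded space `E_{T+n}` acts as a nonzero multiple of `E_T ∂/∂E_{-n}`, and `E_T`
stays injective. A vector of positive degree `d` is therefore moved by some `E_{T+n}`, `n ≥ 1`, to
a nonzero vector of degree at most `d - n`. So every nonzero submodule meets `V`, hence contains the
simple module `V` and is everything.

The only consequence of the Poincaré–Birkhoff–Witt theorem needed is `V ⊆ Ind_ℓ(V)`. It follows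
from a model of `Ind_ℓ(V)` in which words in the negative modes are free: by the Jacobi identity the
relations among negative modes are stable under all modes, and they never reach the empty word.
-/

/-! ### Relations in doubled indices -/

namespace NeveuSchwarz

/-- The Koszul sign of `E_j` and `E_k`. Throughout, the generators of the Neveu–Schwarz algebra are
written `E_k` with doubled indices: `E_k = L_{k/2}` for even `k` and `E_k = G_{k/2}` for odd `k`. -/
noncomputable def sign (j k : ℤ) : ℂ := if Even j ∨ Even k then 1 else -1

/-- The coefficient of `E_{j+k}` in the superbracket `[E_j, E_k]`. -/
noncomputable def structureConst (j k : ℤ) : ℂ :=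
  if Even j then (if Even k then ((j : ℂ) - k) / 2 else ((j : ℂ) - 2 * k) / 4)
  else (if Even k then (2 * (j : ℂ) - k) / 4 else 2)

/-- The central part of the superbracket `[E_j, E_k]` when `c` acts as the scalar `ℓ`. -/
noncomputable def centralTerm (ℓ : ℂ) (j k : ℤ) : ℂ :=
  if j + k = 0 then
    (if Even j then ((j / 2 : ℂ) ^ 3 - j / 2) / 12 else ((j : ℂ) ^ 2 - 1) / 12) * ℓ
  else 0

lemma sign_of_even_right (j : ℤ) {k : ℤ} (hk : Even k) : sign j k = 1 := by simp [sign, hk]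

lemma sign_comm (j k : ℤ) : sign j k = sign k j := by simp only [sign, or_comm]

lemma sign_mul_self (j k : ℤ) : sign j k * sign j k = 1 := by unfold sign; split_ifs <;> norm_num

lemma sign_add_left (i j k : ℤ) : sign (i + j) k = sign i k * sign j k := by
  by_cases hi : Even i <;> by_cases hj : Even j <;> by_cases hk : Even k <;>
    simp [sign, hi, hj, hk, Int.even_add]

lemma sign_add_right (i j k : ℤ) : sign i (j + k) = sign i j * sign i k := by
  rw [sign_comm, sign_add_left, sign_comm j, sign_comm k]

lemma structureConst_comm (j k : ℤ) :
    structureConst k j = -(sign j k * structureConst j k) := by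
  by_cases hj : Even j <;> by_cases hk : Even k <;>
    simp only [sign, structureConst, hj, hk, or_self, or_true, true_or, if_true, if_false] <;> ring

lemma structureConst_jacobi (i j k : ℤ) :
    structureConst j k * structureConst i (j + k) =
      structureConst i j * structureConst (i + j) k +
        sign i j * structureConst i k * structureConst j (i + k) := by
  by_cases hi : Even i <;> by_cases hj : Even j <;> by_cases hk : Even k <;>
    simp only [structureConst, sign, hi, hj, hk, Int.even_add, iff_true, iff_false, not_true,
      or_self, or_true, true_or, if_true, if_false] <;> push_cast <;> ring

lemma centralTerm_comm (ℓ : ℂ) (j k : ℤ) :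
    centralTerm ℓ k j = -(sign j k * centralTerm ℓ j k) := by
  by_cases h : j + k = 0
  · obtain rfl : k = -j := by omega
    by_cases hj : Even j <;>
      simp only [sign, centralTerm, even_neg, hj, add_neg_cancel, neg_add_cancel, or_self, if_true,
        if_false] <;> push_cast <;> ring
  · simp [centralTerm, h, add_comm k j]

lemma centralTerm_jacobi (ℓ : ℂ) (i j k : ℤ) :
    structureConst j k * centralTerm ℓ i (j + k) =
      structureConst i j * centralTerm ℓ (i + j) k +
        sign i j * structureConst i k * centralTerm ℓ j (i + k) := by
  by_cases h : i + j + k = 0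
  · have hjik : j + (i + k) = 0 := by omega
    have hijk : i + (j + k) = 0 := by omega
    obtain rfl : k = -i - j := by omega
    simp only [centralTerm, h, hjik, hijk, if_true]
    by_cases hi : Even i <;> by_cases hj : Even j <;>
      simp only [structureConst, sign, hi, hj, Int.even_sub, Int.even_add, even_neg, iff_true,
        iff_false, not_true, or_self, or_true, true_or, if_true, if_false] <;>
      push_cast <;> ring
  · simp [centralTerm, ← add_assoc, h, show ¬ j + i + k = 0 by omega]

lemma centralTerm_mul_sign (ℓ : ℂ) (i j k : ℤ) :
    centralTerm ℓ j k * (sign i j * sign i k) = centralTerm ℓ j k := by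
  by_cases h : j + k = 0
  · rw [← sign_add_right, h, sign_of_even_right i Even.zero, mul_one]
  · simp [centralTerm, h]

section Defect

variable {A : Type*} [Ring A] [Algebra ℂ A]

/-- The failure of the operators `E` to satisfy the Neveu–Schwarz relation for `[E_j, E_k]` at
central charge `ℓ`. -/
noncomputable def defect (ℓ : ℂ) (E : ℤ → A) (j k : ℤ) : A :=
  E j * E k - sign j k • (E k * E j) - structureConst j k • E (j + k) - centralTerm ℓ j k • 1

variable (ℓ : ℂ) (E : ℤ → A)

lemma defect_comm (j k : ℤ) : defect ℓ E k j = -(sign j k • defect ℓ E j k) := by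
  simp only [defect, structureConst_comm j k, centralTerm_comm ℓ j k, sign_comm k j, add_comm k j]
  linear_combination (norm := module) (-sign_mul_self j k) • (E k * E j)

/-- The Jacobi identity for the free superalgebra on the `E_k`, rewritten in terms of defects: it
holds for arbitrary operators, whether or not they satisfy the relations. -/
lemma defect_jacobi (i j k : ℤ) :
    E i * defect ℓ E j k - (sign i j * sign i k) • (defect ℓ E j k * E i) =
      defect ℓ E i j * E k - (sign i k * sign j k) • (E k * defect ℓ E i j) +
      sign i j • (E j * defect ℓ E i k - (sign i j * sign j k) • (defect ℓ E i k * E j)) -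
      structureConst j k • defect ℓ E i (j + k) + structureConst i j • defect ℓ E (i + j) k +
      (sign i j * structureConst i k) • defect ℓ E j (i + k) := by
  have hij := sign_mul_self i j
  have hz1 := centralTerm_mul_sign ℓ i j k
  have hz2 := centralTerm_mul_sign ℓ k i j
  have hz3 := centralTerm_mul_sign ℓ j i k
  rw [sign_comm k i, sign_comm k j] at hz2
  rw [sign_comm j i] at hz3
  have hc := structureConst_jacobi i j k
  have hz := centralTerm_jacobi ℓ i j k
  simp only [defect, mul_sub, sub_mul, smul_mul_assoc, mul_smul_comm, mul_one, one_mul, smul_sub,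
    sign_add_left, sign_add_right, mul_assoc, ← add_assoc, add_comm j i, sign_comm j i]
  linear_combination (norm := module) (-hc) • E (i + j + k) - hz • (1 : A) + hz1 • E i
    - hz2 • E k - sign i j • hz3 • E j
    + (sign j k * hij) • (E i * (E k * E j)) - (sign i k * sign j k * hij) • (E k * (E i * E j))

lemma defect_even_even (m n : ℤ) :
    defect ℓ E (2 * m) (2 * n) =
      E (2 * m) * E (2 * n) - E (2 * n) * E (2 * m) - ((m : ℂ) - n) • E (2 * (m + n)) -
        ((if m + n = 0 then ((m : ℂ) ^ 3 - m) / 12 else 0) * ℓ) • 1 := by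
  have hmn : 2 * (m + n) = 0 ↔ m + n = 0 := by omega
  simp only [defect, sign, structureConst, centralTerm, ← mul_add, hmn, even_two_mul, true_or,
    if_true]
  push_cast
  split_ifs <;> module

lemma defect_even_odd (m n : ℤ) :
    defect ℓ E (2 * m) (2 * n - 1) =
      E (2 * m) * E (2 * n - 1) - E (2 * n - 1) * E (2 * m) -
        (((m : ℂ) - 2 * n + 1) / 2) • E (2 * (m + n) - 1) := by
  have hmn : ¬ 2 * (m + n) - 1 = 0 := by omega
  have hodd : ¬ Even (2 * n - 1) := by simp
  simp only [defect, sign, structureConst, centralTerm, hmn, hodd, even_two_mul, true_or, if_true,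
    if_false, show 2 * m + (2 * n - 1) = 2 * (m + n) - 1 by ring]
  push_cast
  module

lemma defect_odd_odd (m n : ℤ) :
    defect ℓ E (2 * m - 1) (2 * n - 1) =
      E (2 * m - 1) * E (2 * n - 1) + E (2 * n - 1) * E (2 * m - 1) -
        (2 : ℂ) • E (2 * (m + n - 1)) -
        ((if m + n = 1 then ((m : ℂ) ^ 2 - m) / 3 else 0) * ℓ) • 1 := by
  have hmn : 2 * (m + n - 1) = 0 ↔ m + n = 1 := by omega
  have hodd (k : ℤ) : ¬ Even (2 * k - 1) := by simp
  simp only [defect, sign, structureConst, centralTerm, hmn, hodd, or_self, if_false,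
    show 2 * m - 1 + (2 * n - 1) = 2 * (m + n - 1) by ring]
  push_cast
  split_ifs <;> module

/-- The operators `E` satisfy all Neveu–Schwarz relations at central charge `ℓ`. -/
def IsRepresentation : Prop := ∀ j k, defect ℓ E j k = 0

variable {ℓ E}

lemma IsRepresentation.of_even_odd
    (hee : ∀ m n : ℤ, defect ℓ E (2 * m) (2 * n) = 0)
    (heo : ∀ m n : ℤ, defect ℓ E (2 * m) (2 * n - 1) = 0)
    (hoo : ∀ m n : ℤ, defect ℓ E (2 * m - 1) (2 * n - 1) = 0) : IsRepresentation ℓ E := by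
  have parity (j : ℤ) : ∃ m, j = 2 * m ∨ j = 2 * m - 1 := ⟨(j + 1) / 2, by omega⟩
  intro j k
  obtain ⟨m, rfl | rfl⟩ := parity j <;> obtain ⟨n, rfl | rfl⟩ := parity k
  · exact hee m n
  · exact heo m n
  · rw [defect_comm, heo, smul_zero, neg_zero]
  · exact hoo m n

end Defect

section Module

variable {M : Type*} [AddCommGroup M] [Module ℂ M] {ℓ : ℂ} {E : ℤ → Module.End ℂ M}

lemma apply_apply_of_defect_eq_zero {j k : ℤ} (h : defect ℓ E j k = 0) (u : M) :
    E j (E k u) =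
      sign j k • E k (E j u) + structureConst j k • E (j + k) u + centralTerm ℓ j k • u := by
  have hu := LinearMap.congr_fun h u
  simp only [defect, LinearMap.sub_apply, LinearMap.smul_apply, Module.End.mul_apply,
    Module.End.one_apply, LinearMap.zero_apply] at hu
  linear_combination (norm := module) hu

lemma IsRepresentation.comm (hE : IsRepresentation ℓ E) (j k : ℤ) (u : M) :
    E j (E k u) =
      sign j k • E k (E j u) + structureConst j k • E (j + k) u + centralTerm ℓ j k • u :=
  apply_apply_of_defect_eq_zero (hE j k) u

lemma IsRepresentation.comm_of_ne (hE : IsRepresentation ℓ E) {j k : ℤ} (h : j + k ≠ 0) (u : M) :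
    E j (E k u) = sign j k • E k (E j u) + structureConst j k • E (j + k) u := by
  simp [hE.comm j k u, centralTerm, h]

lemma IsRepresentation.mapQ {p : Submodule ℂ M} (hp : ∀ k, p ≤ p.comap (E k))
    (hdefect : ∀ j k u, defect ℓ E j k u ∈ p) :
    IsRepresentation ℓ fun k => p.mapQ p (E k) (hp k) := by
  intro j k
  refine Submodule.linearMap_qext p (LinearMap.ext fun u => ?_)
  simpa [defect] using (Submodule.Quotient.mk_eq_zero p).2 (hdefect j k u)

end Module

/-- The Neveu–Schwarz module of central charge `ℓ` on which `E_k` acts as `E k`; `NSRep.G j` is the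
mode of index `2 * j - 1`. -/
noncomputable def ofModes {M : Type} [AddCommGroup M] [Module ℂ M] {ℓ : ℂ}
    {E : ℤ → Module.End ℂ M} (hE : IsRepresentation ℓ E) : NSRep where
  carrier := M
  L m := E (2 * m)
  G j := E (2 * j - 1)
  C := ℓ • LinearMap.id
  commC_L m v := by simp
  commC_G m v := by simp
  rel_LL m n v := by
    have h := LinearMap.congr_fun (defect_even_even ℓ E m n ▸ hE (2 * m) (2 * n)) v
    simp only [LinearMap.sub_apply, LinearMap.smul_apply, Module.End.mul_apply,
      Module.End.one_apply, LinearMap.zero_apply] at h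
    simp only [LinearMap.smul_apply, LinearMap.id_apply]
    linear_combination (norm := module) h
  rel_LG m n v := by
    have h := LinearMap.congr_fun (defect_even_odd ℓ E m n ▸ hE (2 * m) (2 * n - 1)) v
    simp only [LinearMap.sub_apply, LinearMap.smul_apply, Module.End.mul_apply,
      LinearMap.zero_apply] at h
    linear_combination (norm := module) h
  rel_GG m n v := by
    have h := LinearMap.congr_fun (defect_odd_odd ℓ E m n ▸ hE (2 * m - 1) (2 * n - 1)) v
    simp only [LinearMap.sub_apply, LinearMap.add_apply, LinearMap.smul_apply,
      Module.End.mul_apply, Module.End.one_apply, LinearMap.zero_apply] at h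
    simp only [LinearMap.smul_apply, LinearMap.id_apply]
    linear_combination (norm := module) h

lemma ofModes_hasCentralCharge {M : Type} [AddCommGroup M] [Module ℂ M] {ℓ : ℂ}
    {E : ℤ → Module.End ℂ M} (hE : IsRepresentation ℓ E) : (ofModes hE).HasCentralCharge ℓ :=
  fun _ => rfl

end NeveuSchwarz

open NeveuSchwarz

namespace NSRep

variable (M : NSRep)

/-- The action of `E_k` on a Neveu–Schwarz module. -/
noncomputable def mode (k : ℤ) : Module.End ℂ M.carrier :=
  if Even k then M.L (k / 2) else M.G ((k + 1) / 2)

lemma mode_even (m : ℤ) : M.mode (2 * m) = M.L m := by simp [mode]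

lemma mode_odd (j : ℤ) : M.mode (2 * j - 1) = M.G j := by simp [mode]

variable {M}

lemma isRepresentation_mode {ℓ : ℂ} (hM : M.HasCentralCharge ℓ) :
    IsRepresentation ℓ M.mode := by
  refine .of_even_odd (fun m n => ?_) (fun m n => ?_) (fun m n => ?_) <;>
    refine LinearMap.ext fun v => ?_
  · have h := M.rel_LL m n v
    rw [hM v] at h
    simp only [defect_even_even, mode_even, LinearMap.sub_apply, LinearMap.smul_apply,
      Module.End.mul_apply, Module.End.one_apply, LinearMap.zero_apply]
    linear_combination (norm := module) h
  · simp only [defect_even_odd, mode_even, mode_odd, LinearMap.sub_apply, LinearMap.smul_apply,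
      Module.End.mul_apply, LinearMap.zero_apply]
    linear_combination (norm := module) M.rel_LG m n v
  · have h := M.rel_GG m n v
    rw [hM v] at h
    simp only [defect_odd_odd, mode_even, mode_odd, LinearMap.sub_apply, LinearMap.add_apply,
      LinearMap.smul_apply, Module.End.mul_apply, Module.End.one_apply, LinearMap.zero_apply]
    linear_combination (norm := module) h

lemma Invariant.le_comap_mode {p : Submodule ℂ M.carrier} (hp : M.Invariant p) (k : ℤ) :
    p ≤ p.comap (M.mode k) := by
  intro v hv
  unfold mode
  split_ifs
  exacts [hp.1 _ v hv, hp.2.1 _ v hv]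

end NSRep

namespace BRep

variable (V : BRep)

/-- The action of `E_k` on a `b`-module, meaningful for `0 ≤ k` only: negative indices are truncated
by `Int.toNat`. -/
noncomputable def mode (k : ℤ) : Module.End ℂ V.carrier :=
  if Even k then V.L (k / 2).toNat else V.G (k / 2).toNat

lemma mode_even (m : ℕ) : V.mode (2 * m) = V.L m := by simp [mode]

lemma mode_odd (j : ℕ) : V.mode (2 * j + 1) = V.G j := by
  have hdiv : (2 * (j : ℤ) + 1) / 2 = j := by omega
  simp [mode, hdiv]

lemma defect_mode (ℓ : ℂ) {j k : ℤ} (hj : 0 ≤ j) (hk : 0 ≤ k) : defect ℓ V.mode j k = 0 := by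
  have parity {j : ℤ} (hj : 0 ≤ j) : ∃ m : ℕ, j = 2 * (m : ℤ) ∨ j = 2 * (m + 1 : ℤ) - 1 :=
    ⟨(j / 2).toNat, by omega⟩
  have mode_odd' (m : ℕ) : V.mode (2 * (m + 1 : ℤ) - 1) = V.G m := by
    rw [← V.mode_odd]; congr 1; ring
  have even_odd (m n : ℕ) : defect ℓ V.mode (2 * m) (2 * (n + 1 : ℤ) - 1) = 0 := by
    rw [defect_even_odd, show (m + (n + 1) : ℤ) = (m + n : ℕ) + 1 by push_cast; ring]
    refine LinearMap.ext fun v => ?_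
    simp only [mode_even, mode_odd', LinearMap.sub_apply, LinearMap.smul_apply,
      Module.End.mul_apply, LinearMap.zero_apply]
    push_cast
    linear_combination (norm := module) V.rel_LG m n v
  obtain ⟨m, rfl | rfl⟩ := parity hj <;> obtain ⟨n, rfl | rfl⟩ := parity hk
  · have hcentral : (if (m + n : ℤ) = 0 then (((m : ℤ) : ℂ) ^ 3 - (m : ℤ)) / 12 else 0) = 0 := by
      split_ifs with h
      · simp [show m = 0 by omega]
      · rfl
    rw [defect_even_even, hcentral, ← Nat.cast_add]
    refine LinearMap.ext fun v => ?_
    simp only [mode_even, zero_mul, zero_smul, LinearMap.sub_apply, LinearMap.smul_apply,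
      Module.End.mul_apply, LinearMap.zero_apply]
    push_cast
    linear_combination (norm := module) V.rel_LL m n v
  · exact even_odd m n
  · rw [defect_comm, even_odd, smul_zero, neg_zero]
  · rw [defect_odd_odd, if_neg (by omega),
      show (m + 1 + (n + 1) - 1 : ℤ) = (m + n + 1 : ℕ) by push_cast; ring]
    refine LinearMap.ext fun v => ?_
    simp only [mode_even, mode_odd', zero_mul, zero_smul, LinearMap.sub_apply,
      LinearMap.add_apply, LinearMap.smul_apply, Module.End.mul_apply, LinearMap.zero_apply]
    linear_combination (norm := module) V.rel_GG m n v

end BRep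

/-! ### The free model and injectivity of `V → Ind_ℓ(V)` -/

lemma NeveuSchwarz.mode_ofModes {M : Type} [AddCommGroup M] [Module ℂ M] {ℓ : ℂ}
    {E : ℤ → Module.End ℂ M} (hE : IsRepresentation ℓ E) (k : ℤ) : (ofModes hE).mode k = E k := by
  obtain ⟨m, rfl | rfl⟩ : ∃ m, k = 2 * m ∨ k = 2 * m - 1 := ⟨(k + 1) / 2, by omega⟩
  exacts [NSRep.mode_even _ m, NSRep.mode_odd _ m]

namespace BRep

variable (V : BRep) (ℓ : ℂ)

/-- The operator `E_k` on the copy of `V` indexed by a word, where the word `[n₁, …, nᵣ]` stands for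
`E_{-n₁-1} ⋯ E_{-nᵣ-1}`: a negative mode is prepended to the word, and a nonnegative one is moved to
the right past every letter by the Neveu–Schwarz relations until it acts on `V`. -/
noncomputable def freeAct : List ℕ → ℤ → V.carrier →ₗ[ℂ] (List ℕ →₀ V.carrier)
  | w, .negSucc n => Finsupp.lsingle (n :: w)
  | [], .ofNat k => Finsupp.lsingle [] ∘ₗ V.mode k
  | n :: w, .ofNat k =>
      sign k (.negSucc n) • (Finsupp.lmapDomain V.carrier ℂ (List.cons n) ∘ₗ freeAct w k) +
        structureConst k (.negSucc n) • freeAct w (k + .negSucc n) +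
        centralTerm ℓ k (.negSucc n) • Finsupp.lsingle w

/-- The operator `E_k` on the free model `List ℕ →₀ V` of the induced module, in which the relations
between two negative modes are not yet imposed. -/
noncomputable def freeMode (k : ℤ) : Module.End ℂ (List ℕ →₀ V.carrier) :=
  Finsupp.lsum ℂ fun w => V.freeAct ℓ w k

lemma freeMode_single (k : ℤ) (w : List ℕ) (v : V.carrier) :
    V.freeMode ℓ k (Finsupp.single w v) = V.freeAct ℓ w k v := by
  simp [freeMode]

lemma freeMode_negSucc (n : ℕ) :
    V.freeMode ℓ (.negSucc n) = Finsupp.lmapDomain V.carrier ℂ (List.cons n) :=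
  Finsupp.lhom_ext fun w v => by simp [freeMode_single, freeAct]

lemma freeMode_negSucc_single (n : ℕ) (w : List ℕ) (v : V.carrier) :
    V.freeMode ℓ (.negSucc n) (Finsupp.single w v) = Finsupp.single (n :: w) v := by
  simp [freeMode_negSucc]

lemma freeMode_single_nil {k : ℤ} (hk : 0 ≤ k) (v : V.carrier) :
    V.freeMode ℓ k (Finsupp.single [] v) = Finsupp.single [] (V.mode k v) := by
  lift k to ℕ using hk
  simp [freeMode, freeAct]

lemma freeMode_apply_nil {k : ℤ} (hk : k < 0) (u : List ℕ →₀ V.carrier) :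
    V.freeMode ℓ k u [] = 0 := by
  obtain ⟨n, rfl⟩ := Int.eq_negSucc_of_lt_zero hk
  rw [freeMode_negSucc]
  exact Finsupp.mapDomain_of_notMem_range _ _ (by simp)

lemma defect_freeMode_of_nonneg_of_neg {j k : ℤ} (hj : 0 ≤ j) (hk : k < 0) :
    defect ℓ (V.freeMode ℓ) j k = 0 := by
  lift j to ℕ using hj
  obtain ⟨n, rfl⟩ := Int.eq_negSucc_of_lt_zero hk
  refine Finsupp.lhom_ext fun w v => ?_
  simp only [defect, LinearMap.sub_apply, LinearMap.smul_apply, Module.End.mul_apply,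
    Module.End.one_apply, LinearMap.zero_apply, freeMode_negSucc, Finsupp.lmapDomain_apply,
    Finsupp.mapDomain_single, freeMode_single]
  simp only [freeAct, LinearMap.add_apply, LinearMap.smul_apply, LinearMap.comp_apply,
    Finsupp.lmapDomain_apply, Finsupp.lsingle_apply, ← Int.ofNat_eq_natCast]
  module

/-- The relations between negative modes in the free model: the smallest submodule containing their
defects and stable under the negative modes. The quotient by it is a model of
the induced module. -/
noncomputable def freeRelations : Submodule ℂ (List ℕ →₀ V.carrier) :=
  sInf {p | (∀ k < 0, p ≤ p.comap (V.freeMode ℓ k)) ∧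
    ∀ j < 0, ∀ k < 0, ∀ u, defect ℓ (V.freeMode ℓ) j k u ∈ p}

variable {V ℓ}

lemma freeRelations_le {p : Submodule ℂ (List ℕ →₀ V.carrier)}
    (hmode : ∀ k < 0, p ≤ p.comap (V.freeMode ℓ k))
    (hdefect : ∀ j < 0, ∀ k < 0, ∀ u, defect ℓ (V.freeMode ℓ) j k u ∈ p) :
    V.freeRelations ℓ ≤ p :=
  sInf_le ⟨hmode, hdefect⟩

lemma freeMode_mem_freeRelations_of_neg {k : ℤ} (hk : k < 0) {u : List ℕ →₀ V.carrier}
    (hu : u ∈ V.freeRelations ℓ) : V.freeMode ℓ k u ∈ V.freeRelations ℓ :=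
  Submodule.mem_sInf.2 fun p hp => hp.1 k hk (Submodule.mem_sInf.1 hu p hp)

lemma defect_mem_freeRelations_of_neg_right (j : ℤ) {k : ℤ} (hk : k < 0)
    (u : List ℕ →₀ V.carrier) : defect ℓ (V.freeMode ℓ) j k u ∈ V.freeRelations ℓ := by
  obtain hj | hj := le_or_gt 0 j
  · simp [V.defect_freeMode_of_nonneg_of_neg ℓ hj hk]
  · exact Submodule.mem_sInf.2 fun p hp => hp.2 j hj k hk u

lemma defect_mem_freeRelations_of_neg_left {j : ℤ} (hj : j < 0) (k : ℤ)
    (u : List ℕ →₀ V.carrier) : defect ℓ (V.freeMode ℓ) j k u ∈ V.freeRelations ℓ := by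
  rw [defect_comm]
  exact neg_mem (Submodule.smul_mem _ _ (defect_mem_freeRelations_of_neg_right k hj u))

lemma freeMode_defect_mem_freeRelations (i : ℤ) {j k : ℤ} (hj : j < 0) (hk : k < 0)
    (u : List ℕ →₀ V.carrier) :
    V.freeMode ℓ i (defect ℓ (V.freeMode ℓ) j k u) ∈ V.freeRelations ℓ := by
  obtain hi | hi := lt_or_ge i 0
  · exact freeMode_mem_freeRelations_of_neg hi (defect_mem_freeRelations_of_neg_right j hk u)
  have hjacobi := LinearMap.congr_fun (defect_jacobi ℓ (V.freeMode ℓ) i j k) u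
  simp only [V.defect_freeMode_of_nonneg_of_neg ℓ hi hj, V.defect_freeMode_of_nonneg_of_neg ℓ hi hk,
    V.defect_freeMode_of_nonneg_of_neg ℓ hi (add_neg hj hk), zero_mul, mul_zero, smul_zero,
    sub_zero, zero_add, LinearMap.sub_apply, LinearMap.add_apply, LinearMap.smul_apply,
    Module.End.mul_apply, sub_eq_iff_eq_add] at hjacobi
  rw [hjacobi]
  exact add_mem (add_mem
    (Submodule.smul_mem _ _ (defect_mem_freeRelations_of_neg_right _ hk _))
    (Submodule.smul_mem _ _ (defect_mem_freeRelations_of_neg_left hj _ _)))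
    (Submodule.smul_mem _ _ (defect_mem_freeRelations_of_neg_right _ hk _))

variable (V ℓ) in
lemma freeRelations_le_comap_freeMode (k : ℤ) :
    V.freeRelations ℓ ≤ (V.freeRelations ℓ).comap (V.freeMode ℓ k) := by
  let p := V.freeRelations ℓ ⊓ ⨅ k, (V.freeRelations ℓ).comap (V.freeMode ℓ k)
  have mem_p (u) : u ∈ p ↔ u ∈ V.freeRelations ℓ ∧ ∀ k, V.freeMode ℓ k u ∈ V.freeRelations ℓ := by
    simp [p]
  suffices h : V.freeRelations ℓ ≤ p from fun u hu => ((mem_p u).1 (h hu)).2 k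
  refine freeRelations_le (fun j hj u hu => ?_) fun i hi j hj u => ?_
  · rw [mem_p] at hu
    have hju := freeMode_mem_freeRelations_of_neg hj hu.1
    refine (mem_p _).2 ⟨hju, fun k => ?_⟩
    obtain hk | hk := lt_or_ge k 0
    · exact freeMode_mem_freeRelations_of_neg hk hju
    · change V.freeMode ℓ k (V.freeMode ℓ j u) ∈ _
      rw [apply_apply_of_defect_eq_zero (V.defect_freeMode_of_nonneg_of_neg ℓ hk hj)]
      exact add_mem (add_mem
        (Submodule.smul_mem _ _ (freeMode_mem_freeRelations_of_neg hj (hu.2 k)))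
        (Submodule.smul_mem _ _ (hu.2 _))) (Submodule.smul_mem _ _ hu.1)
  · exact (mem_p _).2 ⟨defect_mem_freeRelations_of_neg_right i hj u,
      fun k => freeMode_defect_mem_freeRelations k hi hj u⟩

lemma defect_freeMode_single_mem_freeRelations (w : List ℕ) (v : V.carrier) (j k : ℤ) :
    defect ℓ (V.freeMode ℓ) j k (Finsupp.single w v) ∈ V.freeRelations ℓ := by
  induction w generalizing j k with
  | nil =>
    obtain hj | hj := lt_or_ge j 0
    · exact defect_mem_freeRelations_of_neg_left hj k _
    obtain hk | hk := lt_or_ge k 0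
    · exact defect_mem_freeRelations_of_neg_right j hk _
    have h : defect ℓ (V.freeMode ℓ) j k (Finsupp.single [] v) =
        Finsupp.single [] (defect ℓ V.mode j k v) := by
      simp [defect, freeMode_single_nil, hj, hk, add_nonneg hj hk]
    simp [h, V.defect_mode ℓ hj hk]
  | cons n w ih =>
    obtain hj | hj := lt_or_ge j 0
    · exact defect_mem_freeRelations_of_neg_left hj k _
    obtain hk | hk := lt_or_ge k 0
    · exact defect_mem_freeRelations_of_neg_right j hk _
    have hn : Int.negSucc n < 0 := Int.negSucc_lt_zero n
    have hjacobi := LinearMap.congr_fun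
      (defect_jacobi ℓ (V.freeMode ℓ) j k (.negSucc n)) (Finsupp.single w v)
    simp only [V.defect_freeMode_of_nonneg_of_neg ℓ hj hn,
      V.defect_freeMode_of_nonneg_of_neg ℓ hk hn, zero_mul, mul_zero, smul_zero, sub_zero, add_zero,
      LinearMap.sub_apply, LinearMap.add_apply, LinearMap.smul_apply, Module.End.mul_apply,
      LinearMap.zero_apply, freeMode_negSucc_single] at hjacobi
    have hmode : V.freeMode ℓ (.negSucc n) (defect ℓ (V.freeMode ℓ) j k (Finsupp.single w v)) ∈
        V.freeRelations ℓ := freeRelations_le_comap_freeMode V ℓ _ (ih j k)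
    have hsolve := sub_mem (sub_mem (add_mem
      (Submodule.smul_mem _ (sign j (.negSucc n) * sign k (.negSucc n)) hmode)
      (Submodule.smul_mem _ (structureConst k (.negSucc n)) (ih j (k + .negSucc n))))
      (Submodule.smul_mem _ (structureConst j k) (ih (j + k) (.negSucc n))))
      (Submodule.smul_mem _ (sign j k * structureConst j (.negSucc n))
        (ih k (j + .negSucc n)))
    convert hsolve using 1
    linear_combination (norm := module) -hjacobi

lemma defect_freeMode_mem_freeRelations (j k : ℤ) (u : List ℕ →₀ V.carrier) :
    defect ℓ (V.freeMode ℓ) j k u ∈ V.freeRelations ℓ := by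
  induction u using Finsupp.induction_linear with
  | zero => simp
  | add f g hf hg => simpa only [map_add] using add_mem hf hg
  | single w v => exact defect_freeMode_single_mem_freeRelations w v j k

lemma apply_nil_of_mem_freeRelations {u : List ℕ →₀ V.carrier} (hu : u ∈ V.freeRelations ℓ) :
    u [] = 0 := by
  suffices h : V.freeRelations ℓ ≤ LinearMap.ker (Finsupp.lapply (R := ℂ) []) from h hu
  refine freeRelations_le (fun k hk u _ => V.freeMode_apply_nil ℓ hk u) fun j hj k hk u => ?_
  have hjk : j + k ≠ 0 := (add_neg hj hk).ne
  simp [defect, centralTerm, hjk, freeMode_apply_nil, hj, hk, add_neg hj hk]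

end BRep

namespace IsBLinear

variable {V : BRep} {M : NSRep} {ι : V.carrier →ₗ[ℂ] M.carrier}

lemma of_mode (h : ∀ k, 0 ≤ k → ∀ v, ι (V.mode k v) = M.mode k (ι v)) : IsBLinear V M ι := by
  refine ⟨fun i v => ?_, fun j v => ?_⟩
  · rw [← V.mode_even, ← M.mode_even, h _ (by positivity)]
  · rw [← V.mode_odd, ← M.mode_odd, h _ (by positivity)]
    congr 2; ring

lemma map_mode (hι : IsBLinear V M ι) {k : ℤ} (hk : 0 ≤ k) (v : V.carrier) :
    ι (V.mode k v) = M.mode k (ι v) := by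
  lift k to ℕ using hk
  obtain ⟨m, rfl | rfl⟩ := k.even_or_odd'
  · push_cast
    rw [V.mode_even, M.mode_even, hι.1]
  · push_cast
    rw [V.mode_odd, hι.2, ← M.mode_odd]
    congr 2; ring

end IsBLinear

namespace IsInduced

variable {ℓ : ℂ} {V : BRep} {M : NSRep} {ι : V.carrier →ₗ[ℂ] M.carrier}

lemma injective (hind : IsInduced ℓ V M ι) : Function.Injective ι := by
  let R := V.freeRelations ℓ
  have hE := IsRepresentation.mapQ (BRep.freeRelations_le_comap_freeMode V ℓ)
    BRep.defect_freeMode_mem_freeRelations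
  let f : V.carrier →ₗ[ℂ] (ofModes hE).carrier := R.mkQ ∘ₗ Finsupp.lsingle []
  have hf : IsBLinear V (ofModes hE) f := by
    refine .of_mode fun k hk v => ?_
    rw [mode_ofModes]
    exact congrArg R.mkQ (V.freeMode_single_nil ℓ hk v).symm
  obtain ⟨F, ⟨-, hF⟩, -⟩ := hind.2.2 _ (ofModes_hasCentralCharge hE) f hf
  refine (injective_iff_map_eq_zero ι).2 fun v hv => ?_
  have hfv : f v = 0 := by rw [← hF, LinearMap.comp_apply, hv, map_zero]
  simpa using BRep.apply_nil_of_mem_freeRelations ((Submodule.Quotient.mk_eq_zero R).1 hfv)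

lemma eq_top_of_range_le (hind : IsInduced ℓ V M ι) {p : Submodule ℂ M.carrier}
    (hι : LinearMap.range ι ≤ p) (hp : ∀ k, p ≤ p.comap (M.mode k)) : p = ⊤ := by
  have hE := IsRepresentation.mapQ (ℓ := ℓ) hp fun j k u => by
    simp [NSRep.isRepresentation_mode hind.2.1 j k]
  have hzero : IsBLinear V (ofModes hE) 0 := ⟨fun _ _ => by simp, fun _ _ => by simp⟩
  let π : M.carrier →ₗ[ℂ] (ofModes hE).carrier := p.mkQ
  have hπ : IsNSHom M (ofModes hE) π := by
    refine ⟨fun m v => ?_, fun j v => ?_, fun v => ?_⟩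
    · rw [← M.mode_even]; rfl
    · rw [← M.mode_odd]; rfl
    · rw [hind.2.1 v]; rfl
  have hπι : π ∘ₗ ι = 0 :=
    LinearMap.ext fun v => (Submodule.Quotient.mk_eq_zero p).2 (hι (LinearMap.mem_range_self ι v))
  have huniq : π = 0 := (hind.2.2 _ (ofModes_hasCentralCharge hE) 0 hzero).unique
    ⟨hπ, hπι⟩ ⟨⟨by simp, by simp, by simp⟩, by simp⟩
  exact Submodule.eq_top_iff'.2 fun u =>
    (Submodule.Quotient.mk_eq_zero p).1 (LinearMap.congr_fun huniq u)

end IsInduced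

/-! ### The degree filtration -/

namespace NeveuSchwarz

section Filtration

variable {M : Type*} [AddCommGroup M] [Module ℂ M]

/-- `IsMonomial E B n d u` says that `u` is a product `E_{-m₁} ⋯ E_{-mᵣ} x` with `x ∈ B`, all
`mᵢ ≥ n`, and degree `m₁ + ⋯ + mᵣ` at most `d`. -/
inductive IsMonomial (E : ℤ → Module.End ℂ M) (B : Submodule ℂ M) (n : ℤ) : ℤ → M → Prop
  | of_mem {d : ℤ} {x : M} (hd : 0 ≤ d) (hx : x ∈ B) : IsMonomial E B n d x
  | cons {d e m : ℤ} {y : M} (hm : n ≤ m) (hde : d + m ≤ e) (hy : IsMonomial E B n d y) :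
      IsMonomial E B n e (E (-m) y)

/-- The span of the monomials of degree at most `d` in modes `E_{-m}` with `m ≥ n`. -/
def wordSpan (E : ℤ → Module.End ℂ M) (B : Submodule ℂ M) (n d : ℤ) : Submodule ℂ M :=
  Submodule.span ℂ {y | IsMonomial E B n d y}

/-- The filtration of `M` by the degree of monomials in the negative modes. -/
abbrev filtration (E : ℤ → Module.End ℂ M) (B : Submodule ℂ M) (d : ℤ) : Submodule ℂ M :=
  wordSpan E B 1 d

variable {E : ℤ → Module.End ℂ M} {B : Submodule ℂ M} {n d e m : ℤ} {u : M}

lemma IsMonomial.mem_wordSpan (h : IsMonomial E B n d u) : u ∈ wordSpan E B n d :=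
  Submodule.subset_span h

lemma IsMonomial.mono {n' d' : ℤ} (hn : n' ≤ n) (hd : d ≤ d') (h : IsMonomial E B n d u) :
    IsMonomial E B n' d' u := by
  induction h generalizing d' with
  | of_mem h0 hx => exact .of_mem (h0.trans hd) hx
  | cons hm hde _ ih => exact .cons (hn.trans hm) (hde.trans hd) (ih le_rfl)

lemma IsMonomial.degree_nonneg (hn : 0 ≤ n) (h : IsMonomial E B n d u) : 0 ≤ d := by
  induction h with
  | of_mem h0 _ => exact h0
  | cons hm hde _ ih => omega

lemma wordSpan_mono {n' d' : ℤ} (hn : n' ≤ n) (hd : d ≤ d') :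
    wordSpan E B n d ≤ wordSpan E B n' d' :=
  Submodule.span_mono fun _ h => h.mono hn hd

lemma le_wordSpan (hd : 0 ≤ d) : B ≤ wordSpan E B n d :=
  fun _ hx => Submodule.subset_span (.of_mem hd hx)

lemma map_mem_of_forall_isMonomial {f : Module.End ℂ M} {p : Submodule ℂ M}
    (h : ∀ y, IsMonomial E B n d y → f y ∈ p) (hu : u ∈ wordSpan E B n d) : f u ∈ p :=
  (Submodule.span_le.2 h : wordSpan E B n d ≤ p.comap f) hu

lemma mode_neg_mem_wordSpan (hm : n ≤ m) (hde : d + m ≤ e) (hu : u ∈ wordSpan E B n d) :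
    E (-m) u ∈ wordSpan E B n e :=
  map_mem_of_forall_isMonomial (fun _ hy => (hy.cons hm hde).mem_wordSpan) hu

lemma eq_zero_of_mem_wordSpan (hn : 0 ≤ n) (hd : d < 0) (hu : u ∈ wordSpan E B n d) : u = 0 := by
  suffices h : wordSpan E B n d ≤ ⊥ from (Submodule.mem_bot ℂ).1 (h hu)
  exact Submodule.span_le.2 fun y hy => absurd (hy.degree_nonneg hn) hd.not_ge

lemma wordSpan_le_of_lt (hn : 0 ≤ n) (hdn : d < n) : wordSpan E B n d ≤ B := by
  refine Submodule.span_le.2 fun y hy => ?_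
  cases hy with
  | of_mem _ hx => exact hx
  | cons hm hde hy => have := hy.degree_nonneg hn; omega

variable (E B) in
/-- The vectors `a + E_{-n} s` where `a`, of degree at most `d`, involves no mode `E_{-n}`, and `s`
has degree at most `d - n`; it serves to move a factor `E_{-n}` to the front of a monomial. -/
def splitSpan (n d : ℤ) : Submodule ℂ M :=
  wordSpan E B (n + 1) d ⊔ (wordSpan E B n (d - n)).map (E (-n))

variable {ℓ : ℂ} (hE : IsRepresentation ℓ E)

include hE in
lemma mode_neg_mem_splitSpan (hn : 1 ≤ n) (hm : n ≤ m) (hde : d + m ≤ e)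
    (hu : u ∈ wordSpan E B n d) : E (-m) u ∈ splitSpan E B n e := by
  induction d using Int.strongRec (m := 0) generalizing m e u with
  | lt d hd =>
    rw [eq_zero_of_mem_wordSpan (by omega) hd hu, map_zero]
    exact zero_mem _
  | ge d hd ih =>
    obtain rfl | hnm := hm.eq_or_lt
    · exact Submodule.mem_sup_right
        (Submodule.mem_map_of_mem (wordSpan_mono le_rfl (by omega) hu))
    refine map_mem_of_forall_isMonomial (fun y hy => ?_) hu
    cases hy with
    | of_mem _ hx =>
      exact Submodule.mem_sup_left (mode_neg_mem_wordSpan hnm hde (le_wordSpan hd hx))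
    | @cons d' _ m' y hm' hde' hy =>
      obtain ⟨a, ha, _, ⟨s, hs, rfl⟩, hsplit⟩ :=
        Submodule.mem_sup.1 (ih d' (by omega) hm' hde' hy.mem_wordSpan)
      rw [← hsplit, map_add, hE.comm_of_ne (by omega), ← neg_add]
      exact add_mem (Submodule.mem_sup_left (mode_neg_mem_wordSpan hnm hde ha)) (add_mem
        (Submodule.smul_mem _ _ (Submodule.mem_sup_right
          (Submodule.mem_map_of_mem (mode_neg_mem_wordSpan hm (by omega) hs))))
        (Submodule.smul_mem _ _ (ih (d - n) (by omega) (by omega) (by omega) hs)))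

include hE in
lemma wordSpan_le_splitSpan (hn : 1 ≤ n) : wordSpan E B n d ≤ splitSpan E B n d := by
  refine Submodule.span_le.2 fun y hy => ?_
  cases hy with
  | of_mem hd hx => exact Submodule.mem_sup_left (le_wordSpan hd hx)
  | cons hm hde hy => exact mode_neg_mem_splitSpan hE hn hm hde hy.mem_wordSpan

include hE in
lemma mode_sq_of_odd (hn : Odd n) (hn0 : n ≠ 0) (u : M) : E n (E n u) = E (n + n) u := by
  have h := hE.comm_of_ne (j := n) (k := n) (by omega) u
  simp only [sign, structureConst, Int.not_even_iff_odd.2 hn, or_self, if_false] at h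
  linear_combination (norm := module) (1 / 2 : ℂ) • h

include hE in
lemma wordSpan_le_of_odd (hn : 1 ≤ n) (hodd : Odd n) :
    wordSpan E B n d ≤ wordSpan E B (n + 1) d ⊔ (wordSpan E B (n + 1) (d - n)).map (E (-n)) := by
  refine Submodule.span_le.2 fun y hy => ?_
  induction hy with
  | of_mem hd hx => exact Submodule.mem_sup_left (le_wordSpan hd hx)
  | @cons d e m y hm hde _ ih =>
    obtain ⟨a, ha, _, ⟨s, hs, rfl⟩, rfl⟩ := Submodule.mem_sup.1 ih
    rw [SetLike.mem_coe, map_add]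
    obtain rfl | hnm := hm.eq_or_lt
    · refine add_mem (Submodule.mem_sup_right (Submodule.mem_map_of_mem
        (wordSpan_mono le_rfl (by omega) ha))) (Submodule.mem_sup_left ?_)
      rw [mode_sq_of_odd hE hodd.neg (by omega), ← neg_add]
      exact mode_neg_mem_wordSpan (by omega) (by omega) hs
    · rw [hE.comm_of_ne (by omega), ← neg_add]
      exact add_mem (Submodule.mem_sup_left (mode_neg_mem_wordSpan hnm hde ha)) (add_mem
        (Submodule.smul_mem _ _ (Submodule.mem_sup_right
          (Submodule.mem_map_of_mem (mode_neg_mem_wordSpan hnm (by omega) hs))))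
        (Submodule.smul_mem _ _ (Submodule.mem_sup_left
          (mode_neg_mem_wordSpan (by omega) (by omega) hs))))

include hE in
lemma exists_add_mode_neg_eq (hn : 1 ≤ n) (hu : u ∈ wordSpan E B n d) :
    ∃ a ∈ wordSpan E B (n + 1) d, ∃ s ∈ wordSpan E B n (d - n),
      (Odd n → s ∈ wordSpan E B (n + 1) (d - n)) ∧ a + E (-n) s = u := by
  obtain heven | hodd := Int.even_or_odd n
  · obtain ⟨a, ha, _, ⟨s, hs, rfl⟩, h⟩ := Submodule.mem_sup.1 (wordSpan_le_splitSpan hE hn hu)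
    exact ⟨a, ha, s, hs, fun hodd => absurd heven (Int.not_even_iff_odd.2 hodd), h⟩
  · obtain ⟨a, ha, _, ⟨s, hs, rfl⟩, h⟩ := Submodule.mem_sup.1 (wordSpan_le_of_odd hE hn hodd hu)
    exact ⟨a, ha, s, wordSpan_mono (by omega) le_rfl hs, fun _ => hs, h⟩

/-- The submodule `B` is stable under the nonnegative modes and killed by those of index larger
than `T`. -/
structure IsTruncated (E : ℤ → Module.End ℂ M) (B : Submodule ℂ M) (T : ℤ) : Prop where
  mode_mem : ∀ {k x}, 0 ≤ k → x ∈ B → E k x ∈ B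
  mode_eq_zero : ∀ {k x}, T < k → x ∈ B → E k x = 0

variable {T k : ℤ} (hB : IsTruncated E B T)

include hE hB

lemma IsMonomial.mode_mem_filtration (hu : IsMonomial E B 1 d u) (hk : d ≤ e + k)
    (hkT : d ≤ e ∨ d + T ≤ e + k) : E k u ∈ filtration E B e := by
  induction hu generalizing k e with
  | of_mem hd hx =>
    obtain hk0 | hk0 := lt_or_ge k 0
    · rw [← neg_neg k]
      exact mode_neg_mem_wordSpan (by omega) (by omega) (le_wordSpan (d := 0) le_rfl hx)
    obtain hTk | hTk := lt_or_ge T k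
    · rw [hB.mode_eq_zero hTk hx]
      exact zero_mem _
    · exact le_wordSpan (by omega) (hB.mode_mem hk0 hx)
  | @cons d' _ m y hm hde hy ih =>
    rw [hE.comm]
    refine add_mem (add_mem (Submodule.smul_mem _ _ ?_) (Submodule.smul_mem _ _ ?_)) ?_
    · exact mode_neg_mem_wordSpan hm (sub_add_cancel e m).le (ih (by omega) (by omega))
    · exact ih (by omega) (by omega)
    · obtain hkm | hkm := eq_or_ne (k + -m) 0
      · exact Submodule.smul_mem _ _ (wordSpan_mono le_rfl (by omega) hy.mem_wordSpan)
      · simp [centralTerm, hkm]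

lemma mode_mem_filtration (hk : d ≤ e + k) (hkT : d ≤ e ∨ d + T ≤ e + k)
    (hu : u ∈ filtration E B d) : E k u ∈ filtration E B e :=
  map_mem_of_forall_isMonomial (fun _ hy => hy.mode_mem_filtration hE hB hk hkT) hu

variable (hT : 0 < T)

include hT

lemma pow_mode_mem_filtration (hk : T < k) (hu : u ∈ filtration E B d) (j : ℕ) :
    (E k ^ j) u ∈ filtration E B (d - j) := by
  induction j with
  | zero => simpa using hu
  | succ j ih =>
    rw [pow_succ', Module.End.mul_apply]
    exact mode_mem_filtration hE hB (by omega) (by omega) ih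

lemma IsMonomial.mode_add_mem_filtration (hn : 1 ≤ n) (hu : IsMonomial E B (n + 1) d u) :
    E (T + n) u ∈ filtration E B (d - n - 1) := by
  induction hu with
  | of_mem hd hx =>
    rw [hB.mode_eq_zero (by omega) hx]
    exact zero_mem _
  | @cons d e m y hm hde hy ih =>
    have hy' : IsMonomial E B 1 d y := hy.mono (by omega) le_rfl
    rw [hE.comm]
    refine add_mem (add_mem (Submodule.smul_mem _ _ ?_) (Submodule.smul_mem _ _ ?_)) ?_
    · exact mode_neg_mem_wordSpan (by omega) (by omega) ih
    · exact hy'.mode_mem_filtration hE hB (by omega) (by omega)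
    · exact Submodule.smul_mem _ _ (wordSpan_mono le_rfl (by omega) hy'.mem_wordSpan)

lemma mode_add_mem_filtration (hn : 1 ≤ n) (hu : u ∈ wordSpan E B (n + 1) d) :
    E (T + n) u ∈ filtration E B (d - n - 1) :=
  map_mem_of_forall_isMonomial (fun _ hy => hy.mode_add_mem_filtration hE hB hT hn) hu

/-- The mode `E_T` is injective on the degree `d` part of the associated graded space of the
filtration. -/
def GradedInjective (E : ℤ → Module.End ℂ M) (B : Submodule ℂ M) (T d : ℤ) : Prop :=
  ∀ u ∈ filtration E B d, E T u ∈ filtration E B (d - 1) → u ∈ filtration E B (d - 1)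

variable (hT₂ : Even T)

omit hE hB in
include hT₂ in
lemma structureConst_ne_zero (hn : 1 ≤ n) : structureConst (T + n) (-n) ≠ 0 := by
  obtain h | h := Int.even_or_odd n
  · have hne : (T + n + n : ℂ) ≠ 0 := by exact_mod_cast show T + n + n ≠ 0 by omega
    simpa [structureConst, Int.even_add, hT₂, h] using hne
  · simp [structureConst, Int.even_add, hT₂, Int.not_even_iff_odd.2 h]

omit hB hT in
include hT₂ in
lemma mode_comm_top (hn : T + n ≠ -T) (u : M) :
    E (T + n) (E T u) = E T (E (T + n) u) + structureConst (T + n) T • E (T + n + T) u := by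
  rw [hE.comm_of_ne (by omega), sign_of_even_right _ hT₂, one_smul]

include hT₂

/-- With `X = E_{-n}`, `D = E_{T+n}`, `Z = E_T` and `[D, X] = c Z`, applying `D` turns
`(a + 1) c Z u + X D u` into `(a + 2) c Z (D u) + X D (D u)` up to lower order terms. Since `D u`
has degree at most `d - n`, this is an induction on `d` for all `a` at once. -/
lemma mem_filtration_of_smul_mode_add_mem (hn : 1 ≤ n) (heven : Even n)
    (hinj : ∀ e ≤ d, GradedInjective E B T e) (a : ℕ) (hu : u ∈ filtration E B d)
    (h : ((a + 1) * structureConst (T + n) (-n)) • E T u + E (-n) (E (T + n) u) ∈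
      filtration E B (d - 1)) : u ∈ filtration E B (d - 1) := by
  induction d using Int.strongRec (m := 0) generalizing a u with
  | lt d hd =>
    rw [eq_zero_of_mem_wordSpan zero_le_one hd hu]
    exact zero_mem _
  | ge d _ ih =>
    set c := structureConst (T + n) (-n)
    have hc : (a + 1) * c ≠ 0 :=
      mul_ne_zero a.cast_add_one_ne_zero (structureConst_ne_zero hT hT₂ hn)
    have hDu : E (T + n) u ∈ filtration E B (d - n) :=
      mode_mem_filtration hE hB (by omega) (by omega) hu
    have hDweyl : ((↑(a + 1) + 1) * c) • E T (E (T + n) u) + E (-n) (E (T + n) (E (T + n) u)) =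
        E (T + n) (((a + 1) * c) • E T u + E (-n) (E (T + n) u)) -
          ((a + 1) * c * structureConst (T + n) T) • E (T + n + T) u := by
      rw [map_add, map_smul, mode_comm_top hE hT₂ (by omega) u,
        hE.comm_of_ne (j := T + n) (k := -n) (by omega) (E (T + n) u),
        sign_of_even_right _ heven.neg, add_neg_cancel_right]
      push_cast
      module
    have hDu' : E (T + n) u ∈ filtration E B (d - n - 1) := by
      refine ih (d - n) (by omega) (fun e he => hinj e (by omega)) (a + 1) hDu ?_
      rw [hDweyl]
      exact sub_mem (mode_mem_filtration hE hB (by omega) (by omega) h)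
        (Submodule.smul_mem _ _ (mode_mem_filtration hE hB (by omega) (by omega) hu))
    have htop : ((a + 1) * c) • E T u ∈ filtration E B (d - 1) :=
      (add_mem_cancel_right (mode_neg_mem_wordSpan hn (by omega) hDu')).1 h
    exact hinj d le_rfl u hu ((Submodule.smul_mem_iff _ hc).1 htop)

lemma mem_filtration_of_mode_add_mode_neg (hn : 1 ≤ n)
    (hinj : ∀ e ≤ d, GradedInjective E B T e) (hu : u ∈ wordSpan E B n d)
    (hodd : Odd n → u ∈ wordSpan E B (n + 1) d)
    (h : E (T + n) (E (-n) u) ∈ filtration E B (d - 1)) : u ∈ filtration E B (d - 1) := by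
  have hu' : u ∈ filtration E B d := wordSpan_mono hn le_rfl hu
  rw [hE.comm_of_ne (by omega), add_neg_cancel_right] at h
  obtain heven | hn₂ := Int.even_or_odd n
  · refine mem_filtration_of_smul_mode_add_mem hE hB hT hT₂ hn heven hinj 0 hu' ?_
    rw [sign_of_even_right _ heven.neg, one_smul, add_comm] at h
    simpa using h
  · have hXDu : E (-n) (E (T + n) u) ∈ filtration E B (d - 1) :=
      mode_neg_mem_wordSpan hn (by omega) (mode_add_mem_filtration hE hB hT hn (hodd hn₂))
    rw [add_mem_cancel_left (Submodule.smul_mem _ _ hXDu),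
      Submodule.smul_mem_iff _ (structureConst_ne_zero hT hT₂ hn)] at h
    exact hinj d le_rfl u hu' h

lemma mem_wordSpan_succ_sup (hn : 1 ≤ n) (hinj : ∀ e < d, GradedInjective E B T e)
    (hu : u ∈ wordSpan E B n d ⊔ filtration E B (d - 1))
    (hDu : E (T + n) u ∈ filtration E B (d - n - 1)) :
    u ∈ wordSpan E B (n + 1) d ⊔ filtration E B (d - 1) := by
  obtain ⟨v, hv, r, hr, rfl⟩ := Submodule.mem_sup.1 hu
  have hDr : E (T + n) r ∈ filtration E B (d - n - 1) :=
    mode_mem_filtration hE hB (by omega) (by omega) hr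
  rw [map_add, add_mem_cancel_right hDr] at hDu
  obtain ⟨a, ha, s, hs, hodd, rfl⟩ := exists_add_mode_neg_eq hE hn hv
  rw [map_add, add_mem_cancel_left (mode_add_mem_filtration hE hB hT hn ha)] at hDu
  have hs' : s ∈ filtration E B (d - n - 1) :=
    mem_filtration_of_mode_add_mode_neg hE hB hT hT₂ hn (fun e he => hinj e (by omega)) hs hodd hDu
  rw [add_assoc]
  exact add_mem (Submodule.mem_sup_left ha) (Submodule.mem_sup_right
    (add_mem (mode_neg_mem_wordSpan hn (by omega) hs') hr))

lemma mem_filtration_of_forall_mode_add (hd : 1 ≤ d) (hinj : ∀ e < d, GradedInjective E B T e)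
    (hu : u ∈ filtration E B d)
    (hDu : ∀ n, 1 ≤ n → E (T + n) u ∈ filtration E B (d - n - 1)) :
    u ∈ filtration E B (d - 1) := by
  have key (n : ℕ) : u ∈ wordSpan E B (n + 1) d ⊔ filtration E B (d - 1) := by
    induction n with
    | zero => exact Submodule.mem_sup_left (by simpa using hu)
    | succ n ih =>
      exact_mod_cast mem_wordSpan_succ_sup hE hB hT hT₂ (by omega) hinj ih (hDu _ (by omega))
  have hle : wordSpan E B (d.toNat + 1) d ≤ filtration E B (d - 1) :=
    (wordSpan_le_of_lt (by omega) (by omega)).trans (le_wordSpan (by omega))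
  exact sup_le hle le_rfl (key d.toNat)

variable (hinjB : ∀ x ∈ B, E T x = 0 → x = 0)

include hinjB

lemma gradedInjective (d : ℤ) : GradedInjective E B T d := by
  induction d using Int.strongRec (m := 1) with
  | lt d hd =>
    intro u hu hTu
    have huB : u ∈ B := wordSpan_le_of_lt zero_le_one hd hu
    rw [hinjB u huB (eq_zero_of_mem_wordSpan zero_le_one (by omega) hTu)]
    exact zero_mem _
  | ge d hd ih =>
    intro u hu hTu
    refine mem_filtration_of_forall_mode_add hE hB hT hT₂ hd ih hu fun n hn => ?_
    refine ih (d - n) (by omega) _ (mode_mem_filtration hE hB (by omega) (by omega) hu) ?_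
    rw [← add_mem_cancel_right (Submodule.smul_mem _ (structureConst (T + n) T)
      (mode_mem_filtration hE hB (k := T + n + T) (by omega) (by omega) hu)),
      ← mode_comm_top hE hT₂ (by omega)]
    exact mode_mem_filtration hE hB (by omega) (by omega) hTu

lemma exists_mem_of_mem_filtration {p : Submodule ℂ M} (hp : ∀ k, p ≤ p.comap (E k))
    (hu : u ∈ filtration E B d) (hup : u ∈ p) (hu0 : u ≠ 0) : ∃ x ∈ B, x ≠ 0 ∧ x ∈ p := by
  induction d using Int.strongRec (m := 1) generalizing u with
  | lt d hd => exact ⟨u, wordSpan_le_of_lt zero_le_one hd hu, hu0, hup⟩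
  | ge d hd ih =>
    by_cases hlow : u ∈ filtration E B (d - 1)
    · exact ih (d - 1) (by omega) hlow hup hu0
    obtain ⟨n, hn, hDu⟩ : ∃ n, 1 ≤ n ∧ E (T + n) u ∉ filtration E B (d - n - 1) := by
      by_contra! hcon
      exact hlow (mem_filtration_of_forall_mode_add hE hB hT hT₂ hd
        (fun e _ => gradedInjective hE hB hT hT₂ hinjB e) hu hcon)
    exact ih (d - n) (by omega) (mode_mem_filtration hE hB (by omega) (by omega) hu) (hp _ hup)
      fun h => hDu (h ▸ zero_mem _)

omit hT₂ hinjB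

variable (hgen : ∀ p : Submodule ℂ M, B ≤ p → (∀ k, p ≤ p.comap (E k)) → p = ⊤)

include hgen

lemma exists_mem_filtration (u : M) : ∃ d : ℕ, u ∈ filtration E B d := by
  have hdir : Directed (· ≤ ·) fun d : ℕ => filtration E B d :=
    Monotone.directed_le fun _ _ h => wordSpan_mono le_rfl (Int.ofNat_le.2 h)
  have htop : ⨆ d : ℕ, filtration E B d = ⊤ := by
    refine hgen _ (le_iSup_of_le 0 (le_wordSpan le_rfl)) fun k v hv => ?_
    obtain ⟨d, hd⟩ := (Submodule.mem_iSup_of_directed _ hdir).1 hv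
    exact (Submodule.mem_iSup_of_directed _ hdir).2
      ⟨(d + k.natAbs + T).toNat, mode_mem_filtration hE hB (by omega) (by omega) hd⟩
  exact (Submodule.mem_iSup_of_directed _ hdir).1 (htop ▸ Submodule.mem_top)

lemma exists_forall_mode_eq_zero (u : M) : ∃ N : ℤ, ∀ k, N ≤ k → E k u = 0 := by
  obtain ⟨d, hd⟩ := exists_mem_filtration hE hB hT hgen u
  exact ⟨T + d + 1, fun k hk => eq_zero_of_mem_wordSpan zero_le_one neg_one_lt_zero
    (mode_mem_filtration hE hB (by omega) (by omega) hd)⟩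

lemma exists_pow_mode_eq_zero (hk : T < k) (u : M) : ∃ n : ℕ, 0 < n ∧ (E k ^ n) u = 0 := by
  obtain ⟨d, hd⟩ := exists_mem_filtration hE hB hT hgen u
  exact ⟨d + 1, d.succ_pos, eq_zero_of_mem_wordSpan zero_le_one (by omega)
    (pow_mode_mem_filtration hE hB hT hk hd (d + 1))⟩

end Filtration

end NeveuSchwarz

/-! ### Simplicity of the induced module -/

namespace BRep

variable {V : BRep} {t m : ℕ}

lemma G_eq_zero_of_lt (ht : 0 < t) (hvan : ∀ i, t < i → ∀ v, V.L i v = 0) (hm : t < m)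
    (v : V.carrier) : V.G m v = 0 := by
  have h := V.rel_LG m 0 v
  rw [hvan m hm, hvan m hm, map_zero, sub_zero, add_zero] at h
  refine (smul_eq_zero.1 h.symm).resolve_left ?_
  have hne : (m : ℂ) ≠ 1 := by exact_mod_cast show m ≠ 1 by omega
  simpa [sub_eq_zero] using hne

lemma invariant_ker_G (ht : 0 < t) (hvan : ∀ i, t < i → ∀ v, V.L i v = 0) :
    V.Invariant (LinearMap.ker (V.G t)) := by
  refine ⟨fun i v hv => ?_, fun j v hv => ?_⟩ <;> rw [LinearMap.mem_ker] at hv ⊢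
  · have hG : V.G (i + t) v = 0 := by
      obtain rfl | hi := Nat.eq_zero_or_pos i
      · rwa [zero_add]
      · exact G_eq_zero_of_lt ht hvan (by omega) v
    simpa [hv, hG] using V.rel_LG i t v
  · simpa [hv, hvan (t + j + 1) (by omega)] using V.rel_GG t j v

lemma IsSimple.G_eq_zero_of_le (hV : V.IsSimple) (ht : 0 < t)
    (hvan : ∀ i, t < i → ∀ v, V.L i v = 0) (hm : t ≤ m) (v : V.carrier) : V.G m v = 0 := by
  obtain hm | rfl := hm.lt_or_eq
  · exact G_eq_zero_of_lt ht hvan hm v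
  obtain hker | hker := hV.2 _ (invariant_ker_G ht hvan)
  · have hsq (w : V.carrier) : V.G t (V.G t w) = 0 := by
      have h := V.rel_GG t t w
      rw [hvan _ (by omega), smul_zero, ← two_smul ℂ] at h
      exact (smul_eq_zero.1 h).resolve_left two_ne_zero
    have hG := LinearMap.ker_eq_bot'.1 hker
    obtain ⟨w, hw⟩ := hV.1
    exact absurd (hG w (hG _ (hsq w))) hw
  · exact LinearMap.congr_fun (LinearMap.ker_eq_top.1 hker) v

lemma IsSimple.mode_eq_zero (hV : V.IsSimple) (ht : 0 < t)
    (hvan : ∀ i, t < i → ∀ v, V.L i v = 0) {k : ℤ} (hk : 2 * t < k) (v : V.carrier) :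
    V.mode k v = 0 := by
  unfold mode
  split_ifs with hk₂
  · exact hvan _ (by have := hk₂.two_dvd; omega) v
  · exact hV.G_eq_zero_of_le ht hvan (by omega) v

end BRep

namespace IsBLinear

variable {V : BRep} {M : NSRep} {ι : V.carrier →ₗ[ℂ] M.carrier}

lemma isTruncated_range (h : IsBLinear V M ι) {T : ℤ} (hT : 0 ≤ T)
    (hvan : ∀ k, T < k → ∀ v, V.mode k v = 0) : IsTruncated M.mode (LinearMap.range ι) T where
  mode_mem := by
    rintro k _ hk ⟨v, rfl⟩
    exact ⟨_, h.map_mode hk v⟩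
  mode_eq_zero := by
    rintro k _ hk ⟨v, rfl⟩
    rw [← h.map_mode (hT.trans hk.le), hvan k hk, map_zero]

lemma invariant_comap (h : IsBLinear V M ι) {p : Submodule ℂ M.carrier} (hp : M.Invariant p) :
    V.Invariant (p.comap ι) := by
  refine ⟨fun i v hv => ?_, fun j v hv => ?_⟩
  · rw [Submodule.mem_comap, h.1]
    exact hp.1 _ _ hv
  · rw [Submodule.mem_comap, h.2]
    exact hp.2.1 _ _ hv

lemma eq_zero_of_mode_eq_zero (h : IsBLinear V M ι) (hι : Function.Injective ι) {t : ℕ}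
    (hinj : Function.Injective (V.L t)) (x : M.carrier) (hx : x ∈ LinearMap.range ι)
    (hLx : M.mode (2 * t) x = 0) : x = 0 := by
  obtain ⟨v, rfl⟩ := hx
  rw [← h.map_mode (by omega), BRep.mode_even, map_eq_zero_iff ι hι,
    map_eq_zero_iff _ hinj] at hLx
  rw [hLx, map_zero]

end IsBLinear

namespace IsInduced

variable {V : BRep} {M : NSRep} {ι : V.carrier →ₗ[ℂ] M.carrier} {ℓ : ℂ} {t : ℕ}

lemma isSimple (hind : IsInduced ℓ V M ι) (hV : V.IsSimple) (ht : 0 < t)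
    (hinj : Function.Injective (V.L t))
    (hB : IsTruncated M.mode (LinearMap.range ι) (2 * t)) : M.IsSimple := by
  have hι : Function.Injective ι := hind.injective
  obtain ⟨v, hv⟩ := hV.1
  refine ⟨⟨ι v, (map_ne_zero_iff ι hι).2 hv⟩, fun p hp => or_iff_not_imp_left.2 fun hp0 => ?_⟩
  obtain ⟨u, hu, hu0⟩ := p.ne_bot_iff.1 hp0
  have hE : IsRepresentation ℓ M.mode := NSRep.isRepresentation_mode hind.2.1
  obtain ⟨d, hd⟩ :=
    exists_mem_filtration hE hB (by omega) (fun _ => hind.eq_top_of_range_le) u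
  obtain ⟨_, ⟨w, rfl⟩, hw0, hwp⟩ := exists_mem_of_mem_filtration hE hB (by omega)
    (even_two_mul _) (hind.1.eq_zero_of_mode_eq_zero hι hinj) hp.le_comap_mode hd hu hu0
  have hcomap : p.comap ι = ⊤ :=
    (hV.2 _ (hind.1.invariant_comap hp)).resolve_left fun hbot =>
      hw0 (by rw [(Submodule.mem_bot ℂ).1 (hbot ▸ hwp : w ∈ ⊥), map_zero])
  refine hind.eq_top_of_range_le ?_ hp.le_comap_mode
  rw [LinearMap.range_eq_map, Submodule.map_le_iff_le_comap, hcomap]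

lemma isRestricted (hind : IsInduced ℓ V M ι) (ht : 0 < t)
    (hB : IsTruncated M.mode (LinearMap.range ι) (2 * t)) : M.IsRestricted := by
  intro u
  obtain ⟨N, hN⟩ := exists_forall_mode_eq_zero (NSRep.isRepresentation_mode hind.2.1) hB
    (by omega) (fun _ => hind.eq_top_of_range_le) u
  refine ⟨max N 0 + 1, fun i hi => ?_⟩
  rw [← M.mode_even, ← M.mode_odd]
  exact ⟨hN _ (by omega), hN _ (by omega)⟩

lemma locallyNilpotentEnd_mode (hind : IsInduced ℓ V M ι) (ht : 0 < t)
    (hB : IsTruncated M.mode (LinearMap.range ι) (2 * t)) {k : ℤ} (hk : 2 * t < k) :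
    LocallyNilpotentEnd (M.mode k) :=
  exists_pow_mode_eq_zero (NSRep.isRepresentation_mode hind.2.1) hB (by omega)
    (fun _ => hind.eq_top_of_range_le) hk

end IsInduced

/-- Let `V` be a simple `b`-module, `t ∈ ℤ_+` with the action of `L_t` on `V`
injective and `L_i V = 0` for all `i > t`, and let `ℓ ∈ ℂ`. Then on `Ind_ℓ(V)` the actions of
`L_i` and `G_{i-1/2}` for all integers `i > t` are locally nilpotent; consequently `Ind_ℓ(V)`
is a simple restricted Neveu–Schwarz module of central charge `ℓ`. -/
theorem induced_module_locally_nilpotent_simple_restricted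
    (V : BRep) (hV : V.IsSimple) (t : ℕ) (ht : 0 < t)
    (hinj : Function.Injective (V.L t))
    (hvan : ∀ i : ℕ, t < i → ∀ v : V.carrier, V.L i v = 0)
    (ℓ : ℂ) (M : NSRep) (ι : V.carrier →ₗ[ℂ] M.carrier)
    (hind : IsInduced ℓ V M ι) :
    (∀ i : ℤ, (t : ℤ) < i →
      LocallyNilpotentEnd (M.L i) ∧ LocallyNilpotentEnd (M.G i)) ∧
    M.IsSimple ∧ M.IsRestricted ∧ M.HasCentralCharge ℓ := by
  have hB : IsTruncated M.mode (LinearMap.range ι) (2 * t) :=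
    hind.1.isTruncated_range (by omega) fun k hk => hV.mode_eq_zero ht hvan hk
  refine ⟨fun i hi => ?_, hind.isSimple hV ht hinj hB, hind.isRestricted ht hB, hind.2.1⟩
  rw [← M.mode_even, ← M.mode_odd]
  exact ⟨hind.locallyNilpotentEnd_mode ht hB (by omega),
    hind.locallyNilpotentEnd_mode ht hB (by omega)⟩
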